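/- (Recursion, Theorem 1.) Let ψ be a procedure environment and φ a contract environment. Assume: (i) for every procedure environment ψ', if ψ' ⊨ φ then for every procedure name y, the Hoare triple ψ' ⊨ {pre_φ(y)} ψ(y) {post_φ(y)} holds (i.e., the body of y taken from ψ satisfies its contract when executed under ψ'); and (ii) if ψ ⊨ φ then ψ ⊨ {P} c {Q}. Then ψ ⊨ {P} c {Q}. -/

import Mathlib

/-- Memory states: location `x_i` holds value `σ i`. -/
abbrev Mem : Type := ℕ → ℕ

/-- Update `σ[i/n]`: maps `i` to `n` and agrees with `σ` elsewhere. -/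
def Mem.update (σ : Mem) (i n : ℕ) : Mem := fun j => if j = i then n else σ j

inductive Aop : Type
  | add | mul | sub

def Aop.eval : Aop → ℕ → ℕ → ℕ
  | .add => fun m n => m + n
  | .mul => fun m n => m * n
  | .sub => fun m n => m - n

/-- Arithmetic expressions. -/
inductive Aexp : Type
  | const : ℕ → Aexp
  | loc : ℕ → Aexp
  | deref : ℕ → Aexp
  | addr : ℕ → Aexp
  | binop : Aop → Aexp → Aexp → Aexp

def Aexp.eval : Aexp → Mem → ℕ
  | .const n, _ => n
  | .loc i, σ => σ i
  | .deref i, σ => σ (σ i)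
  | .addr i, _ => i
  | .binop o a1 a2, σ => o.eval (a1.eval σ) (a2.eval σ)

inductive Bcmp : Type
  | le | lt | eq

def Bcmp.eval : Bcmp → ℕ → ℕ → Bool
  | .le => fun m n => decide (m ≤ n)
  | .lt => fun m n => decide (m < n)
  | .eq => fun m n => decide (m = n)

/-- Boolean expressions. -/
inductive Bexp : Type
  | tt : Bexp
  | ff : Bexp
  | cmp : Bcmp → Aexp → Aexp → Bexp
  | and : Bexp → Bexp → Bexp
  | or : Bexp → Bexp → Bexp
  | not : Bexp → Bexp

def Bexp.eval : Bexp → Mem → Bool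
  | .tt, _ => true
  | .ff, _ => false
  | .cmp o a1 a2, σ => o.eval (a1.eval σ) (a2.eval σ)
  | .and b1 b2, σ => b1.eval σ && b2.eval σ
  | .or b1 b2, σ => b1.eval σ || b2.eval σ
  | .not b, σ => !(b.eval σ)

/-- Commands, over a type `Y` of procedure names. -/
inductive Com (Y : Type) : Type
  | skip : Com Y
  | assign : ℕ → Aexp → Com Y                      -- x_i := a
  | store : ℕ → Aexp → Com Y                       -- *x_i := a
  | seq : Com Y → Com Y → Com Y
  | assert : (Mem → Prop) → Com Y
  | cond : Bexp → Com Y → Com Y → Com Y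
  | while : Bexp → (Mem → Prop) → Com Y → Com Y
  | call : Y → Com Y

/-- Big-step operational semantics `⟨c, σ⟩ →_ψ σ'`. -/
inductive BigStep {Y : Type} (ψ : Y → Com Y) : Com Y → Mem → Mem → Prop
  | skip (σ : Mem) : BigStep ψ .skip σ σ
  | assign (i : ℕ) (a : Aexp) (σ : Mem) :
      BigStep ψ (.assign i a) σ (σ.update i (a.eval σ))
  | store (i : ℕ) (a : Aexp) (σ : Mem) :
      BigStep ψ (.store i a) σ (σ.update (σ i) (a.eval σ))
  | seq {c1 c2 : Com Y} {σ σ'' σ' : Mem} :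
      BigStep ψ c1 σ σ'' → BigStep ψ c2 σ'' σ' → BigStep ψ (.seq c1 c2) σ σ'
  | assert (P : Mem → Prop) (σ : Mem) : BigStep ψ (.assert P) σ σ
  | condTrue {b : Bexp} {c1 c2 : Com Y} {σ σ' : Mem} :
      b.eval σ = true → BigStep ψ c1 σ σ' → BigStep ψ (.cond b c1 c2) σ σ'
  | condFalse {b : Bexp} {c1 c2 : Com Y} {σ σ' : Mem} :
      b.eval σ = false → BigStep ψ c2 σ σ' → BigStep ψ (.cond b c1 c2) σ σ'
  | whileTrue {b : Bexp} {I : Mem → Prop} {c : Com Y} {σ σ'' σ' : Mem} :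
      b.eval σ = true → BigStep ψ c σ σ'' → BigStep ψ (.while b I c) σ'' σ' →
      BigStep ψ (.while b I c) σ σ'
  | whileFalse {b : Bexp} {I : Mem → Prop} {c : Com Y} {σ : Mem} :
      b.eval σ = false → BigStep ψ (.while b I c) σ σ
  | call {y : Y} {σ σ' : Mem} : BigStep ψ (ψ y) σ σ' → BigStep ψ (.call y) σ σ'

/-- Hoare triple `ψ ⊨ {P} c {Q}`. -/
def HoareTriple {Y : Type} (ψ : Y → Com Y) (P : Mem → Prop) (c : Com Y)
    (Q : Mem → Mem → Prop) : Prop :=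
  ∀ σ σ' : Mem, P σ → BigStep ψ c σ σ' → Q σ σ'

/-- A contract: a precondition and a postcondition. -/
abbrev Contract : Type := (Mem → Prop) × (Mem → Mem → Prop)

/-- Contract validity `ψ ⊨ φ`. -/
def ContractValid {Y : Type} (ψ : Y → Com Y) (φ : Y → Contract) : Prop :=
  ∀ y : Y, HoareTriple ψ (φ y).1 (.call y) (φ y).2

/-- Pointwise big-step execution of a sequence of commands. -/
inductive BigSteps {Y : Type} (ψ : Y → Com Y) : List (Com Y) → List Mem → List Mem → Prop
  | nil : BigSteps ψ [] [] []
  | cons {c : Com Y} {cs : List (Com Y)} {σ σ' : Mem} {σs σs' : List Mem} :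
      BigStep ψ c σ σ' → BigSteps ψ cs σs σs' →
      BigSteps ψ (c :: cs) (σ :: σs) (σ' :: σs')

/-- Relational Hoare triple `ψ ⊨ {P} (c_k) {Q}`. -/
def RHoare {Y : Type} (ψ : Y → Com Y) (P : List Mem → Prop) (cs : List (Com Y))
    (Q : List Mem → List Mem → Prop) : Prop :=
  ∀ σs σs' : List Mem, P σs → BigSteps ψ cs σs σs' → Q σs σs'

/-- A relational contract: a relational precondition and postcondition. -/
abbrev RContract : Type := (List Mem → Prop) × (List Mem → List Mem → Prop)

/-- Relational contract validity `ψ ⊨ Φ`. -/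
def RContractValid {Y : Type} (ψ : Y → Com Y) (Φ : List Y → RContract) : Prop :=
  ∀ ys : List Y, ys ≠ [] → RHoare ψ (Φ ys).1 (ys.map Com.call) (Φ ys).2

/-- Optimized main VC function `Tc`. -/
def Tc {Y : Type} : Com Y → Mem → Mem → (Y → Contract) → (Prop → Prop) → Prop
  | .skip, σ, σ', _, f => f (σ = σ')
  | .assign i a, σ, σ', _, f => f (σ' = σ.update i (a.eval σ))
  | .store i a, σ, σ', _, f => f (σ' = σ.update (σ i) (a.eval σ))
  | .assert P', σ, σ', _, f => f (P' σ ∧ σ = σ')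
  | .seq c0 c1, σ, σ', φ, f =>
      ∀ σ'' : Mem, Tc c0 σ σ'' φ (fun p1 => Tc c1 σ'' σ' φ (fun p2 => f (p1 ∧ p2)))
  | .cond b c0 c1, σ, σ', φ, f =>
      Tc c0 σ σ' φ (fun p1 => Tc c1 σ σ' φ (fun p2 =>
        f ((b.eval σ = true → p1) ∧ (b.eval σ = false → p2))))
  | .call y, σ, σ', φ, f => f ((φ y).1 σ ∧ (φ y).2 σ σ')
  | .while b I _, σ, σ', _, f => f (I σ ∧ I σ' ∧ b.eval σ' = false)

/-- Optimized auxiliary VC function `Ta`. -/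
def Ta {Y : Type} : Com Y → Mem → (Y → Contract) → Prop
  | .skip, _, _ => True
  | .assign _ _, _, _ => True
  | .store _ _, _, _ => True
  | .assert P', σ, _ => P' σ
  | .seq c0 c1, σ, φ =>
      Ta c0 σ φ ∧ ∀ σ' : Mem, Tc c0 σ σ' φ (fun p => p → Ta c1 σ' φ)
  | .cond b c0 c1, σ, φ =>
      (b.eval σ = true → Ta c0 σ φ) ∧ (b.eval σ = false → Ta c1 σ φ)
  | .call y, σ, φ => (φ y).1 σ
  | .while b I c, σ, φ =>
      I σ ∧ (∀ σ' : Mem, I σ' → b.eval σ' = true → Ta c σ' φ) ∧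
      (∀ σ' σ'' : Mem, I σ' → Tc c σ' σ'' φ (fun p => p → I σ''))

/-- Optimized procedure VC `Tf`. -/
def Tf {Y : Type} (φ : Y → Contract) (ψ : Y → Com Y) : Prop :=
  ∀ (y : Y) (σ σ' : Mem), (φ y).1 σ →
    Ta (ψ y) σ φ ∧ Tc (ψ y) σ σ' φ (fun p => p → (φ y).2 σ σ')

/-- Naive main VC function `Tcⁿ`. -/
def Tcn {Y : Type} : Com Y → Mem → (Y → Contract) → (Mem → Prop) → Prop
  | .skip, σ, _, P => P σ
  | .assign i a, σ, _, P => P (σ.update i (a.eval σ))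
  | .store i a, σ, _, P => P (σ.update (σ i) (a.eval σ))
  | .assert P', σ, _, P => P' σ → P σ
  | .seq c0 c1, σ, φ, P => Tcn c0 σ φ (fun σ'' => Tcn c1 σ'' φ P)
  | .cond b c0 c1, σ, φ, P =>
      (b.eval σ = true → Tcn c0 σ φ P) ∧ (b.eval σ = false → Tcn c1 σ φ P)
  | .call y, σ, φ, P => ∀ σ' : Mem, (φ y).1 σ ∧ (φ y).2 σ σ' → P σ'
  | .while b I _, σ, _, P => ∀ σ' : Mem, I σ ∧ I σ' ∧ b.eval σ' = false → P σ'

/-- Naive auxiliary VC function `Taⁿ`. -/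
def Tan {Y : Type} : Com Y → Mem → (Y → Contract) → Prop
  | .skip, _, _ => True
  | .assign _ _, _, _ => True
  | .store _ _, _, _ => True
  | .assert P', σ, _ => P' σ
  | .seq c0 c1, σ, φ => Tan c0 σ φ ∧ Tcn c0 σ φ (fun σ' => Tan c1 σ' φ)
  | .cond b c0 c1, σ, φ =>
      (b.eval σ = true → Tan c0 σ φ) ∧ (b.eval σ = false → Tan c1 σ φ)
  | .call y, σ, φ => (φ y).1 σ
  | .while b I c, σ, φ =>
      I σ ∧ (∀ σ' : Mem, I σ' → b.eval σ' = true → Tan c σ' φ ∧ Tcn c σ' φ I)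

/-- Naive procedure VC `Tfⁿ`. -/
def Tfn {Y : Type} (φ : Y → Contract) (ψ : Y → Com Y) : Prop :=
  ∀ (y : Y) (σ : Mem), (φ y).1 σ →
    Tan (ψ y) σ φ ∧ Tcn (ψ y) σ φ (fun σ' => (φ y).2 σ σ')

/-- Relational VC function `Tr` (recursion over the sequence of commands). -/
def Tr {Y : Type} : List (Com Y) → List Mem → List Mem → (Y → Contract) →
    (Prop → Prop) → Prop
  | [], [], [], _, f => f True
  | c :: cs, σ :: σs, σ' :: σs', φ, f =>
      Tc c σ σ' φ (fun pn => Tr cs σs σs' φ (fun pm => f (pn ∧ pm)))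
  | _, _, _, _, _ => True

/-- Relational auxiliary VC function `Ta_r`. -/
def Tar {Y : Type} : List (Com Y) → List Mem → (Y → Contract) → Prop
  | [], [], _ => True
  | c :: cs, σ :: σs, φ => Ta c σ φ ∧ Tar cs σs φ
  | _, _, _ => True

/-- `Proccall(y, σ, σ', ψ)`. -/
def Proccall {Y : Type} (y : Y) (σ σ' : Mem) (ψ : Y → Com Y) : Prop :=
  BigStep ψ (.call y) σ σ'

/-- `Procpred`: all the calls of the sequence have taken place. -/
def Procpred {Y : Type} (ψ : Y → Com Y) : List Y → List Mem → List Mem → Prop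
  | [], [], [] => True
  | y :: ys, σ :: σs, σ' :: σs' => Proccall y σ σ' ψ ∧ Procpred ψ ys σs σs'
  | _, _, _ => False

/-- `Tpr`: translation of the relational contracts into a logical formula. -/
def Tpr {Y : Type} (Φ : List Y → RContract) (ψ : Y → Com Y) : Prop :=
  ∀ (ys : List Y) (σs σs' : List Mem), ys ≠ [] →
    Procpred ψ ys σs σs' → (Φ ys).1 σs → (Φ ys).2 σs σs'

/-- `Φcall`: reduce singleton relational contracts to standard contracts with
tracked calls. -/
def Phicall {Y : Type} (Φ : List Y → RContract) (ψ : Y → Com Y) : Y → Contract :=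
  fun y =>
    (fun σ => (Φ [y]).1 [σ],
     fun σ σ' => (Φ [y]).2 [σ] [σ'] ∧ Proccall y σ σ' ψ)

/-- Relational procedure VC `Tf_r`. -/
def Tfr {Y : Type} (Φ : List Y → RContract) (ψ : Y → Com Y) : Prop :=
  ∀ (ys : List Y) (σs σs' : List Mem) (ψ' : Y → Com Y),
    (Φ ys).1 σs → Tpr Φ ψ' →
    Tar (ys.map ψ) σs (Phicall Φ ψ') ∧
    Tr (ys.map ψ) σs σs' (Phicall Φ ψ')
      (fun p => p → (Φ ys).2 σs σs')

/-- The recursive summation command `c_sum`. -/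
def csum : Com Unit :=
  .cond (.cmp .lt (.loc 1) (.loc 2))
    (.seq (.assign 3 (.binop .add (.loc 3) (.loc 1)))
      (.seq (.assign 1 (.binop .add (.loc 1) (.const 1)))
        (.call ())))
    .skip

/-- The procedure environment binding `y_sum` to `c_sum`. -/
def psum : Unit → Com Unit := fun _ => csum

/-- Inline the procedure bodies given by `θ`. -/
def Com.inl {Y : Type} (θ : Y → Com Y) : Com Y → Com Y
  | .skip => .skip
  | .assign i a => .assign i a
  | .store i a => .store i a
  | .seq c d => .seq (c.inl θ) (d.inl θ)
  | .assert P => .assert P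
  | .cond b c d => .cond b (c.inl θ) (d.inl θ)
  | .while b I c => .while b I (c.inl θ)
  | .call y => θ y

/-- The command contains no procedure call. -/
def Com.NoCall {Y : Type} : Com Y → Prop
  | .skip => True
  | .assign _ _ => True
  | .store _ _ => True
  | .seq c d => c.NoCall ∧ d.NoCall
  | .assert _ => True
  | .cond _ c d => c.NoCall ∧ d.NoCall
  | .while _ _ c => c.NoCall
  | .call _ => False

/-- The `n`-th call-free approximation of `ψ`. -/
def approxEnv {Y : Type} (ψ : Y → Com Y) : ℕ → Y → Com Y
  | 0 => fun _ => .while .tt (fun _ => True) .skip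
  | n + 1 => fun y => (ψ y).inl (approxEnv ψ n)

theorem noCall_inl {Y : Type} {θ : Y → Com Y} (h : ∀ y, (θ y).NoCall) (c : Com Y) :
    (c.inl θ).NoCall := by
  induction c <;> simp_all [Com.inl, Com.NoCall]

theorem noCall_approxEnv {Y : Type} (ψ : Y → Com Y) (n : ℕ) (y : Y) :
    (approxEnv ψ n y).NoCall := by
  induction n generalizing y with
  | zero => simp [approxEnv, Com.NoCall]
  | succ n ih => exact noCall_inl ih _

theorem bigStep_noCall {Y : Type} {θ χ : Y → Com Y} {c : Com Y} {σ σ' : Mem}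
    (h : BigStep θ c σ σ') (hc : c.NoCall) : BigStep χ c σ σ' := by
  induction h with
  | skip => exact .skip _
  | assign => exact .assign _ _ _
  | store => exact .store _ _ _
  | seq _ _ i1 i2 => exact .seq (i1 hc.1) (i2 hc.2)
  | assert => exact .assert _ _
  | condTrue hb _ i => exact .condTrue hb (i hc.1)
  | condFalse hb _ i => exact .condFalse hb (i hc.2)
  | whileTrue hb _ _ i1 i2 => exact .whileTrue hb (i1 hc) (i2 hc)
  | whileFalse hb => exact .whileFalse hb
  | call => exact hc.elim

theorem bigStep_inl {Y : Type} {θ χ : Y → Com Y} (hθ : ∀ y, (θ y).NoCall)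
    {c : Com Y} {σ σ' : Mem} (h : BigStep θ c σ σ') : BigStep χ (c.inl θ) σ σ' := by
  induction h with
  | skip => exact .skip _
  | assign => exact .assign _ _ _
  | store => exact .store _ _ _
  | seq _ _ i1 i2 => exact .seq i1 i2
  | assert => exact .assert _ _
  | condTrue hb _ i => exact .condTrue hb i
  | condFalse hb _ i => exact .condFalse hb i
  | whileTrue hb _ _ i1 i2 => exact .whileTrue hb i1 i2
  | whileFalse hb => exact .whileFalse hb
  | call h _ => exact bigStep_noCall h (hθ _)

theorem bigStep_while_mono {Y : Type} {θ χ : Y → Com Y} {b : Bexp} {I : Mem → Prop}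
    {c d : Com Y} (hcd : ∀ σ σ', BigStep χ c σ σ' → BigStep θ d σ σ') {σ σ' : Mem}
    (h : BigStep χ (.while b I c) σ σ') : BigStep θ (.while b I d) σ σ' := by
  generalize he : Com.while b I c = e at h
  induction h with
  | whileTrue hb h1 _ _ i2 =>
    cases he
    exact .whileTrue hb (hcd _ _ h1) (i2 rfl)
  | whileFalse hb => cases he; exact .whileFalse hb
  | _ => cases he

theorem bigStep_of_inl {Y : Type} {θ χ : Y → Com Y} (hθ : ∀ y, (θ y).NoCall)
    (c : Com Y) : ∀ σ σ' : Mem, BigStep χ (c.inl θ) σ σ' → BigStep θ c σ σ' := by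
  induction c with
  | skip => intro σ σ' h; cases h; exact .skip _
  | assign => intro σ σ' h; cases h; exact .assign _ _ _
  | store => intro σ σ' h; cases h; exact .store _ _ _
  | seq c d ic id =>
    intro σ σ' h
    cases h with
    | seq h1 h2 => exact .seq (ic _ _ h1) (id _ _ h2)
  | assert => intro σ σ' h; cases h; exact .assert _ _
  | cond b c d ic id =>
    intro σ σ' h
    cases h with
    | condTrue hb h => exact .condTrue hb (ic _ _ h)
    | condFalse hb h => exact .condFalse hb (id _ _ h)
  | call y => intro σ σ' h; exact .call (bigStep_noCall h (hθ y))
  | _ b I c ic => intro σ σ' h; exact bigStep_while_mono ic h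

theorem not_bigStep_loop {Y : Type} {χ : Y → Com Y} {I : Mem → Prop} {c : Com Y}
    {σ σ' : Mem} (h : BigStep χ (.while .tt I c) σ σ') : False := by
  generalize he : Com.while Bexp.tt I c = e at h
  induction h with
  | whileTrue _ _ _ _ i2 => exact i2 he
  | whileFalse hb => cases he; simp [Bexp.eval] at hb
  | _ => cases he

theorem bigStep_approxEnv {Y : Type} {ψ : Y → Com Y} {c : Com Y} {σ σ' : Mem}
    (h : BigStep ψ c σ σ') : ∃ n, ∀ m, n ≤ m → BigStep (approxEnv ψ m) c σ σ' := by
  induction h with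
  | skip => exact ⟨0, fun _ _ => .skip _⟩
  | assign => exact ⟨0, fun _ _ => .assign _ _ _⟩
  | store => exact ⟨0, fun _ _ => .store _ _ _⟩
  | seq _ _ i1 i2 =>
    obtain ⟨n1, i1⟩ := i1
    obtain ⟨n2, i2⟩ := i2
    exact ⟨n1 + n2, fun m hm => .seq (i1 m (by omega)) (i2 m (by omega))⟩
  | assert => exact ⟨0, fun _ _ => .assert _ _⟩
  | condTrue hb _ i =>
    obtain ⟨n, i⟩ := i
    exact ⟨n, fun m hm => .condTrue hb (i m hm)⟩
  | condFalse hb _ i =>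
    obtain ⟨n, i⟩ := i
    exact ⟨n, fun m hm => .condFalse hb (i m hm)⟩
  | whileTrue hb _ _ i1 i2 =>
    obtain ⟨n1, i1⟩ := i1
    obtain ⟨n2, i2⟩ := i2
    exact ⟨n1 + n2, fun m hm => .whileTrue hb (i1 m (by omega)) (i2 m (by omega))⟩
  | whileFalse hb => exact ⟨0, fun _ _ => .whileFalse hb⟩
  | call _ i =>
    obtain ⟨n, i⟩ := i
    refine ⟨n + 1, fun m hm => ?_⟩
    obtain ⟨k, rfl⟩ : ∃ k, m = k + 1 := ⟨m - 1, by omega⟩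
    exact .call (bigStep_inl (noCall_approxEnv ψ k) (i k (by omega)))

/-- Theorem 1 (Recursion). -/
theorem recursion_hoare_triple {Y : Type} (ψ : Y → Com Y) (φ : Y → Contract)
    (P : Mem → Prop) (c : Com Y) (Q : Mem → Mem → Prop)
    (h1 : ∀ ψ' : Y → Com Y, ContractValid ψ' φ →
      ∀ y : Y, HoareTriple ψ' (φ y).1 (ψ y) (φ y).2)
    (h2 : ContractValid ψ φ → HoareTriple ψ P c Q) :
    HoareTriple ψ P c Q := by
  apply h2
  have hv : ∀ n, ContractValid (approxEnv ψ n) φ := by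
    intro n
    induction n with
    | zero =>
      intro y σ σ' _ h
      cases h with
      | call h => exact (not_bigStep_loop h).elim
    | succ n ih =>
      intro y σ σ' hp h
      cases h with
      | call h => exact h1 _ ih y σ σ' hp (bigStep_of_inl (noCall_approxEnv ψ n) _ _ _ h)
  intro y σ σ' hp h
  obtain ⟨n, hn⟩ := bigStep_approxEnv h
  exact hv n y σ σ' hp (hn n le_rfl)
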